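/- Let n ≥ 3 and define ψ : ℝ^n → ℝ by ψ(u) = max{ 2·Top_1(u), Top_3(u) }. Then ψ is a symmetric monotone norm, but the set function f(J) = ψ(1⟨J⟩), where 1 is the all-ones vector, is not submodular: for pairwise distinct indices j₁, j₂, j ∈ {1,…,n} one has f({j₁}) = 2, f({j₁,j}) = 2, f({j₁,j₂}) = 2 and f({j₁,j₂,j}) = 3, so f({j₁,j₂,j}) − f({j₁,j₂}) > f({j₁,j}) − f({j₁}), violating the diminishing-marginal-returns characterization of submodularity. -/

import Mathlib

/-- The top-`k` norm: the sum of the `k` largest values among `|u 1|, …, |u n|`,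
expressed as the supremum over all size-`k` subsets of the sum of absolute values. -/
noncomputable def topk {n : ℕ} (k : ℕ) (u : Fin n → ℝ) : ℝ :=
  sSup {t : ℝ | ∃ S : Finset (Fin n), S.card = k ∧ t = ∑ j ∈ S, |u j|}

/-- `p⟨J⟩`: the vector whose `j`-th entry is `p j` if `j ∈ J` and `0` otherwise. -/
def restrictVec {n : ℕ} (p : Fin n → ℝ) (J : Finset (Fin n)) : Fin n → ℝ :=
  fun j => if j ∈ J then p j else 0

theorem topk_bdd {n : ℕ} (k : ℕ) (u : Fin n → ℝ) :
    BddAbove {t : ℝ | ∃ S : Finset (Fin n), S.card = k ∧ t = ∑ j ∈ S, |u j|} := by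
  refine ⟨∑ j, |u j|, ?_⟩
  rintro t ⟨S, -, rfl⟩
  exact Finset.sum_le_sum_of_subset_of_nonneg (Finset.subset_univ _) (fun _ _ _ => abs_nonneg _)

theorem le_topk {n : ℕ} {k : ℕ} (u : Fin n → ℝ) (S : Finset (Fin n)) (hS : S.card = k) :
    ∑ j ∈ S, |u j| ≤ topk k u :=
  le_csSup (topk_bdd k u) ⟨S, hS, rfl⟩

theorem topk_le {n : ℕ} {k : ℕ} (hk : k ≤ n) (u : Fin n → ℝ) (c : ℝ)
    (h : ∀ S : Finset (Fin n), S.card = k → ∑ j ∈ S, |u j| ≤ c) : topk k u ≤ c := by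
  obtain ⟨S, -, hS⟩ := Finset.exists_subset_card_eq (s := (Finset.univ : Finset (Fin n)))
    (n := k) (by simpa using hk)
  refine csSup_le ⟨_, S, hS, rfl⟩ ?_
  rintro t ⟨S, hS, rfl⟩
  exact h S hS

theorem topk_nonneg {n : ℕ} (k : ℕ) (u : Fin n → ℝ) : 0 ≤ topk k u := by
  apply Real.sSup_nonneg
  rintro t ⟨S, -, rfl⟩
  exact Finset.sum_nonneg (fun _ _ => abs_nonneg _)

theorem topk_add {n : ℕ} {k : ℕ} (hk : k ≤ n) (u v : Fin n → ℝ) :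
    topk k (u + v) ≤ topk k u + topk k v := by
  refine topk_le hk _ _ fun S hS => ?_
  calc ∑ j ∈ S, |(u + v) j| ≤ ∑ j ∈ S, (|u j| + |v j|) :=
        Finset.sum_le_sum fun i _ => abs_add_le _ _
    _ = ∑ j ∈ S, |u j| + ∑ j ∈ S, |v j| := Finset.sum_add_distrib
    _ ≤ _ := add_le_add (le_topk u S hS) (le_topk v S hS)

theorem topk_smul_le {n : ℕ} {k : ℕ} (hk : k ≤ n) (θ : ℝ) (u : Fin n → ℝ) :
    topk k (θ • u) ≤ |θ| * topk k u := by
  refine topk_le hk _ _ fun S hS => ?_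
  simp only [Pi.smul_apply, smul_eq_mul, abs_mul, ← Finset.mul_sum]
  exact mul_le_mul_of_nonneg_left (le_topk u S hS) (abs_nonneg _)

theorem topk_smul {n : ℕ} {k : ℕ} (hk : k ≤ n) (θ : ℝ) (u : Fin n → ℝ) :
    topk k (θ • u) = |θ| * topk k u := by
  refine le_antisymm (topk_smul_le hk θ u) ?_
  by_cases h : θ = 0
  · subst h
    simpa using topk_nonneg k (0 : Fin n → ℝ)
  · have h1 := topk_smul_le hk θ⁻¹ (θ • u)
    rw [smul_smul, inv_mul_cancel₀ h, one_smul, abs_inv] at h1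
    have hp : 0 < |θ| := abs_pos.2 h
    calc |θ| * topk k u ≤ |θ| * (|θ|⁻¹ * topk k (θ • u)) :=
          mul_le_mul_of_nonneg_left h1 hp.le
      _ = _ := by rw [mul_inv_cancel_left₀ hp.ne']

theorem topk_mono {n : ℕ} {k : ℕ} (hk : k ≤ n) (u v : Fin n → ℝ) (h0 : ∀ i, 0 ≤ u i)
    (h : ∀ i, u i ≤ v i) : topk k u ≤ topk k v := by
  refine topk_le hk _ _ fun S hS => ?_
  refine le_trans (Finset.sum_le_sum fun i _ => ?_) (le_topk v S hS)
  exact abs_le_abs_of_nonneg (h0 i) (h i)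

theorem topk_perm_le {n : ℕ} {k : ℕ} (hk : k ≤ n) (u : Fin n → ℝ) (π : Equiv.Perm (Fin n)) :
    topk k (u ∘ π) ≤ topk k u := by
  refine topk_le hk _ _ fun S hS => ?_
  have := le_topk u (S.map π.toEmbedding) (by simpa using hS)
  simpa using this

theorem topk_perm {n : ℕ} {k : ℕ} (hk : k ≤ n) (u : Fin n → ℝ) (π : Equiv.Perm (Fin n)) :
    topk k (u ∘ π) = topk k u := by
  refine le_antisymm (topk_perm_le hk u π) ?_
  have := topk_perm_le hk (u ∘ π) π.symm
  simpa [Function.comp_assoc] using this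

theorem sum_restrict {n : ℕ} (S J : Finset (Fin n)) :
    ∑ i ∈ S, |restrictVec (fun _ => (1 : ℝ)) J i| = ((S ∩ J).card : ℝ) := by
  simp [restrictVec, apply_ite abs]

theorem topk_restrict {n : ℕ} {k : ℕ} (hk : k ≤ n) (J : Finset (Fin n)) :
    topk k (restrictVec (fun _ => (1 : ℝ)) J) = ((min k J.card : ℕ) : ℝ) := by
  apply le_antisymm
  · refine topk_le hk _ _ fun S hS => ?_
    rw [sum_restrict, Nat.cast_le, ← hS]
    exact le_min (Finset.card_le_card Finset.inter_subset_left)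
      (Finset.card_le_card Finset.inter_subset_right)
  · rcases le_total k J.card with h | h
    · obtain ⟨S, hSJ, hS⟩ := Finset.exists_subset_card_eq h
      have := le_topk (restrictVec (fun _ => (1 : ℝ)) J) S hS
      rw [sum_restrict, Finset.inter_eq_left.2 hSJ, hS] at this
      rwa [min_eq_left h]
    · obtain ⟨S, hJS, -, hS⟩ := Finset.exists_subsuperset_card_eq (Finset.subset_univ J) h
        (by simpa using hk)
      have := le_topk (restrictVec (fun _ => (1 : ℝ)) J) S hS
      rw [sum_restrict, Finset.inter_eq_right.2 hJS] at this
      rwa [min_eq_right h]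

/-- For `n ≥ 3`, the function `ψ(u) = max{2·Top_1(u), Top_3(u)}` is a symmetric monotone
norm, but the set function `f(J) = ψ(1⟨J⟩)` is not submodular: for pairwise distinct
`j₁, j₂, j` one has `f({j₁}) = 2`, `f({j₁,j}) = 2`, `f({j₁,j₂}) = 2`, `f({j₁,j₂,j}) = 3`,
so `f({j₁,j₂,j}) − f({j₁,j₂}) > f({j₁,j}) − f({j₁})`, violating the
diminishing-marginal-returns characterization of submodularity. -/
theorem max_two_top1_top3_norm_not_submodular {n : ℕ} (hn : 3 ≤ n)
    (ψ : (Fin n → ℝ) → ℝ)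
    (hψ : ∀ u, ψ u = max (2 * topk 1 u) (topk 3 u))
    (f : Finset (Fin n) → ℝ)
    (hf : ∀ J, f J = ψ (restrictVec (fun _ => (1 : ℝ)) J))
    (j₁ j₂ j : Fin n) (h12 : j₁ ≠ j₂) (h1j : j₁ ≠ j) (h2j : j₂ ≠ j) :
    ((∀ u, ψ u = 0 ↔ u = 0) ∧
      (∀ u v, ψ (u + v) ≤ ψ u + ψ v) ∧
      (∀ (θ : ℝ) u, ψ (θ • u) = |θ| * ψ u) ∧
      (∀ u v, (∀ i, 0 ≤ u i) → (∀ i, u i ≤ v i) → ψ u ≤ ψ v) ∧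
      (∀ u (π : Equiv.Perm (Fin n)), ψ (u ∘ π) = ψ u)) ∧
    f {j₁} = 2 ∧ f {j₁, j} = 2 ∧ f {j₁, j₂} = 2 ∧ f {j₁, j₂, j} = 3 ∧
    f {j₁, j₂, j} - f {j₁, j₂} > f {j₁, j} - f {j₁} := by
  have hn1 : 1 ≤ n := by omega
  have e1 : f {j₁} = 2 := by
    rw [hf, hψ, topk_restrict hn1, topk_restrict hn]; norm_num
  have e2 : f {j₁, j} = 2 := by
    rw [hf, hψ, topk_restrict hn1, topk_restrict hn, Finset.card_pair h1j]; norm_num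
  have e3 : f {j₁, j₂} = 2 := by
    rw [hf, hψ, topk_restrict hn1, topk_restrict hn, Finset.card_pair h12]; norm_num
  have e4 : f {j₁, j₂, j} = 3 := by
    rw [hf, hψ, topk_restrict hn1, topk_restrict hn,
      Finset.card_eq_three.2 ⟨j₁, j₂, j, h12, h1j, h2j, rfl⟩]; norm_num
  refine ⟨⟨?_, ?_, ?_, ?_, ?_⟩, e1, e2, e3, e4, ?_⟩
  · intro u
    constructor
    · intro h
      funext i
      have h1 := le_topk u {i} (Finset.card_singleton i)
      have h2 : 2 * topk 1 u ≤ 0 := by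
        rw [← h, hψ]; exact le_max_left _ _
      rw [Finset.sum_singleton] at h1
      exact abs_nonpos_iff.1 (by linarith)
    · rintro rfl
      have h1 := topk_smul hn1 0 (0 : Fin n → ℝ)
      have h3 := topk_smul hn 0 (0 : Fin n → ℝ)
      simp only [smul_zero, abs_zero, zero_mul] at h1 h3
      rw [hψ, h1, h3]; simp
  · intro u v
    rw [hψ, hψ, hψ]
    have h1 := topk_add hn1 u v
    have h3 := topk_add hn u v
    apply max_le
    · linarith [le_max_left (2 * topk 1 u) (topk 3 u), le_max_left (2 * topk 1 v) (topk 3 v)]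
    · linarith [le_max_right (2 * topk 1 u) (topk 3 u), le_max_right (2 * topk 1 v) (topk 3 v)]
  · intro θ u
    rw [hψ, hψ, topk_smul hn1, topk_smul hn, mul_max_of_nonneg _ _ (abs_nonneg θ),
      mul_left_comm]
  · intro u v h0 h
    rw [hψ, hψ]
    have h1 := topk_mono hn1 u v h0 h
    exact max_le_max (by linarith) (topk_mono hn u v h0 h)
  · intro u π
    rw [hψ, hψ, topk_perm hn1, topk_perm hn]
  · rw [e1, e2, e3, e4]; norm_num
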